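/- Let (x, y) ∈ SL(2,ℂ) × SL(2,ℂ) be a pair of matrices such that the (1,2) entry of y is nonzero, and set s = tr x, t = tr y, u = tr(xy). Then there exists a lower-triangular matrix z ∈ SL(2,ℂ) such that z·y·z⁻¹ = y_t = [[t, 1], [−1, 0]] and z·x·z⁻¹ = [[a, b], [u + b − a·t, s − a]] for some a, b ∈ ℂ. -/

import Mathlib

open Matrix

abbrev SL2C := Matrix.SpecialLinearGroup (Fin 2) ℂ

noncomputable def tr2 (x : SL2C) : ℂ := Matrix.trace (x : Matrix (Fin 2) (Fin 2) ℂ)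

/-!
A conjugator `z` from `y` to `y_t` has rows `v`, `w` with `w y = -v` and `v y = t v + w`. The first
equation forces `w = -v y⁻¹`, and the second is then Cayley–Hamilton, `y + y⁻¹ = t`. Lower
triangularity means `v = (r, 0)`, which gives `det z = r² y₀₁`, so one needs a square root of
`y₀₁⁻¹`. Finally, the traces of `X` and `X y_t` determine the second row of `X` from the first, and
these traces are invariant under conjugation by `z`.
-/

open scoped MatrixGroups

variable {R : Type*} [CommRing R]

section Conjugation

variable {n : Type*} [Fintype n] [DecidableEq n]

theorem specialLinearGroup_inv_val_mul_val (z : Matrix.SpecialLinearGroup n R) :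
    z⁻¹.val * z.val = 1 :=
  congrArg Subtype.val (inv_mul_cancel z)

theorem trace_specialLinearGroup_conj (z : Matrix.SpecialLinearGroup n R) (M : Matrix n n R) :
    trace (z.val * M * z⁻¹.val) = trace M := by
  rw [trace_mul_cycle, specialLinearGroup_inv_val_mul_val, Matrix.one_mul]

theorem specialLinearGroup_conj_mul (z : Matrix.SpecialLinearGroup n R) (M N : Matrix n n R) :
    z.val * M * z⁻¹.val * (z.val * N * z⁻¹.val) = z.val * (M * N) * z⁻¹.val := by
  simp only [Matrix.mul_assoc]
  rw [← Matrix.mul_assoc z⁻¹.val, specialLinearGroup_inv_val_mul_val, Matrix.one_mul]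

end Conjugation

theorem exists_mul_self_mul_eq_one {M : Type*} [CommMonoid M] {a : M} (ha : IsUnit a)
    (hsq : IsSquare a) : ∃ r, r * r * a = 1 := by
  obtain ⟨s, rfl⟩ := hsq
  obtain ⟨r, hrs⟩ := (isUnit_of_mul_isUnit_left ha).exists_left_inv
  exact ⟨r, by rw [mul_mul_mul_comm, hrs, one_mul]⟩

/-- The matrix `y_t`: the normal form of an element of `SL(2, R)` of trace `t`. -/
def traceNormalForm (t : R) : SL(2, R) :=
  ⟨!![t, 1; -1, 0], by simp⟩

/-- The matrix with rows `v = (r, 0)` and `-v y⁻¹`, which conjugates `y` to its trace normal form.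
The condition on `r` says that its determinant is `1`. -/
def lowerConjugator (y : SL(2, R)) (r : R) (hr : r * r * y 0 1 = 1) : SL(2, R) :=
  ⟨!![r, 0; -(r * y 1 1), r * y 0 1], by rw [det_fin_two_of]; linear_combination hr⟩

theorem lowerConjugator_mul (y : SL(2, R)) (r : R) (hr : r * r * y 0 1 = 1) :
    lowerConjugator y r hr * y = traceNormalForm (trace y.val) * lowerConjugator y r hr := by
  have hdet : y 0 0 * y 1 1 - y 0 1 * y 1 0 = 1 := (det_fin_two y.val).symm.trans y.det_coe
  ext i j
  rw [Matrix.SpecialLinearGroup.coe_mul, Matrix.SpecialLinearGroup.coe_mul]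
  fin_cases i <;> fin_cases j <;>
    simp only [lowerConjugator, traceNormalForm, mul_apply, Fin.sum_univ_two, trace_fin_two,
      of_apply, cons_val_zero, cons_val_one, Fin.zero_eta, Fin.mk_one]
  · ring
  · ring
  · linear_combination -r * hdet
  · ring

theorem lowerConjugator_conj (y : SL(2, R)) (r : R) (hr : r * r * y 0 1 = 1) :
    lowerConjugator y r hr * y * (lowerConjugator y r hr)⁻¹ = traceNormalForm (trace y.val) :=
  mul_inv_eq_of_eq_mul (lowerConjugator_mul y r hr)

theorem eta_fin_two_trace_mul_traceNormalForm (X : Matrix (Fin 2) (Fin 2) R) (t : R) :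
    X = !![X 0 0, X 0 1;
      trace (X * (traceNormalForm t).val) + X 0 1 - X 0 0 * t, trace X - X 0 0] := by
  have h₁₀ : trace (X * (traceNormalForm t).val) + X 0 1 - X 0 0 * t = X 1 0 := by
    simp only [traceNormalForm, trace_fin_two, mul_apply, Fin.sum_univ_two, of_apply, cons_val_zero,
      cons_val_one]
    ring
  have h₁₁ : trace X - X 0 0 = X 1 1 := by rw [trace_fin_two, add_sub_cancel_left]
  rw [h₁₀, h₁₁]
  exact eta_fin_two X

theorem conjugate_to_normal_form_general (x : Matrix (Fin 2) (Fin 2) R) (y : SL(2, R))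
    (hy : IsUnit (y 0 1)) (hsq : IsSquare (y 0 1)) :
    ∃ z : SL(2, R), z 0 1 = 0 ∧
      (z * y * z⁻¹).val = !![trace y.val, 1; -1, 0] ∧
      ∃ a b : R, z.val * x * z⁻¹.val =
        !![a, b; trace (x * y.val) + b - a * trace y.val, trace x - a] := by
  obtain ⟨r, hr⟩ := exists_mul_self_mul_eq_one hy hsq
  let z := lowerConjugator y r hr
  have hconj : z * y * z⁻¹ = traceNormalForm (trace y.val) := lowerConjugator_conj y r hr
  let X := z.val * x * z⁻¹.val
  have htr : trace X = trace x := trace_specialLinearGroup_conj z x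
  have htr_mul : trace (X * (traceNormalForm (trace y.val)).val) = trace (x * y.val) :=
    calc trace (X * (traceNormalForm (trace y.val)).val)
      _ = trace (X * (z.val * y.val * z⁻¹.val)) := by
        rw [← hconj, Matrix.SpecialLinearGroup.coe_mul, Matrix.SpecialLinearGroup.coe_mul]
      _ = trace (z.val * (x * y.val) * z⁻¹.val) := by rw [specialLinearGroup_conj_mul]
      _ = trace (x * y.val) := trace_specialLinearGroup_conj z _
  refine ⟨z, rfl, congrArg Subtype.val hconj, X 0 0, X 0 1, ?_⟩
  rw [← htr, ← htr_mul]
  exact eta_fin_two_trace_mul_traceNormalForm X (trace y.val)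

/-- if the `(1,2)` entry of `y` is nonzero, there is a lower-triangular
`z ∈ SL(2,ℂ)` conjugating `y` to `y_t = [[t,1],[-1,0]]` and `x` to
`[[a,b],[u+b−at, s−a]]`, where `s = tr x`, `t = tr y`, `u = tr (xy)`. -/
theorem conjugate_to_normal_form (x y : SL2C)
    (hy : (y : Matrix (Fin 2) (Fin 2) ℂ) 0 1 ≠ 0) :
    ∃ z : SL2C, (z : Matrix (Fin 2) (Fin 2) ℂ) 0 1 = 0 ∧
      ((z * y * z⁻¹ : SL2C) : Matrix (Fin 2) (Fin 2) ℂ) = !![tr2 y, 1; -1, 0] ∧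
      ∃ a b : ℂ,
        ((z * x * z⁻¹ : SL2C) : Matrix (Fin 2) (Fin 2) ℂ) =
          !![a, b; tr2 (x * y) + b - a * tr2 y, tr2 x - a] := by
  simpa only [tr2, Matrix.SpecialLinearGroup.coe_mul] using
    conjugate_to_normal_form_general x.val y hy.isUnit (IsAlgClosed.exists_eq_mul_self _)
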